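/- Let G₂ be a group acting on a unital C*-algebra C, and let G₁ ≤ G₂ be a subgroup of finite index n. Then the reduced crossed product C ⋊ᵣ G₂ embeds as a C*-subalgebra of (C ⋊ᵣ G₁) ⊗ Mₙ(ℂ), where Mₙ(ℂ) is the algebra of n×n complex matrices. -/

import Mathlib

/-- `(T, ι, u)` realizes the reduced crossed product `A ⋊ᵣ G` of the action `α` of the
discrete group `G` on the unital C*-algebra `A`: `ι : A → T` is a unital *-homomorphism,
`u : G → T` is a unitary representation implementing `α`, the elements `ι(a) u_g` span a
dense subspace of `T`, and there is a faithful conditional expectation `E : T → A`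
vanishing on `ι(a) u_g` for `g ≠ 1`.  (These properties characterize the reduced crossed
product among C*-completions of the algebraic crossed product.) -/
structure IsReducedCrossedProduct (G : Type*) [Group G] {A T : Type*}
    [CStarAlgebra A] [CStarAlgebra T]
    (α : G → A ≃⋆ₐ[ℂ] A) (ι : A →⋆ₐ[ℂ] T) (u : G → T) : Prop where
  action_one : ∀ x : A, α 1 x = x
  action_mul : ∀ (g h : G) (x : A), α (g * h) x = α g (α h x)
  unitary : ∀ g, u g ∈ unitary T
  u_one : u 1 = 1
  u_mul : ∀ g h, u (g * h) = u g * u h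
  covariant : ∀ (g : G) (a : A), u g * ι a * star (u g) = ι (α g a)
  generates :
    Dense ((Submodule.span ℂ {x : T | ∃ (a : A) (g : G), x = ι a * u g} : Submodule ℂ T) : Set T)
  expectation : ∃ E : T →ₗ[ℂ] A, (∀ x, ‖E x‖ ≤ ‖x‖) ∧ (∀ a, E (ι a) = a) ∧
    (∀ (a : A) (g : G), g ≠ 1 → E (ι a * u g) = 0) ∧
    (∀ (a : A) (x : T) (b : A), E (ι a * x * ι b) = a * E x * b) ∧
    (∀ x, ∃ y, E (star x * x) = star y * y) ∧
    (∀ x, E (star x * x) = 0 → x = 0)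

/-- A closed star subalgebra of `B × C` on which both projections are injective, and whose first
projection is dense, is the graph of an injective star homomorphism `B → C`. -/
theorem StarSubalgebra.exists_injective_starAlgHom_of_isClosed {B C : Type*}
    [CStarAlgebra B] [CStarAlgebra C] (D : StarSubalgebra ℂ (B × C))
    (hD : IsClosed (D : Set (B × C))) (hfst : ∀ x ∈ D, x.1 = 0 → x = 0)
    (hsnd : ∀ x ∈ D, x.2 = 0 → x = 0) (hdense : Dense (Prod.fst '' (D : Set (B × C)))) :
    ∃ f : B →⋆ₐ[ℂ] C, Function.Injective f := by
  let : CStarAlgebra D := StarSubalgebra.cstarAlgebra D (h_closed := hD)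
  let p : D →⋆ₐ[ℂ] B := (StarAlgHom.fst ℂ B C).comp D.subtype
  let q : D →⋆ₐ[ℂ] C := (StarAlgHom.snd ℂ B C).comp D.subtype
  have hp : Function.Injective p :=
    (injective_iff_map_eq_zero p).2 fun x hx => Subtype.ext (hfst x x.2 hx)
  have hq : Function.Injective q :=
    (injective_iff_map_eq_zero q).2 fun x hx => Subtype.ext (hsnd x x.2 hx)
  have hrange : Set.range p = Prod.fst '' (D : Set (B × C)) := by
    ext b
    constructor
    · rintro ⟨x, rfl⟩
      exact ⟨x, x.2, rfl⟩
    · rintro ⟨x, hx, rfl⟩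
      exact ⟨⟨x, hx⟩, rfl⟩
  have hiso : Isometry p := NonUnitalStarAlgHom.isometry p hp
  have hsurj : Function.Surjective p := by
    rw [← Set.range_eq_univ, ← hiso.isClosedEmbedding.isClosed_range.closure_eq, hrange]
    exact hdense.closure_eq
  let e : D ≃⋆ₐ[ℂ] B := StarAlgEquiv.ofBijective p ⟨hp, hsurj⟩
  exact ⟨q.comp (e.symm : B →⋆ₐ[ℂ] D), hq.comp e.symm.injective⟩

/-- The linear span of the products `π a * u g`, for a covariant pair `(π, u)`, as a star
subalgebra. -/
def covariantSpan {G A B : Type*} [Group G] [Ring A] [StarRing A] [Algebra ℂ A]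
    [Ring B] [StarRing B] [Algebra ℂ B] [StarModule ℂ B]
    (α : G → A → A) (π : A →⋆ₐ[ℂ] B) (u : G →* B) (hstar : ∀ g, star (u g) = u g⁻¹)
    (hcov : ∀ g a, u g * π a = π (α g a) * u g) : StarSubalgebra ℂ B where
  __ := (Submodule.span ℂ {x : B | ∃ (a : A) (g : G), x = π a * u g}).toSubalgebra
    (Submodule.subset_span ⟨1, 1, by simp⟩) (by
      intro x y hx hy
      induction hx, hy using Submodule.span_induction₂ with
      | mem_mem x y hx hy =>
        obtain ⟨a, g, rfl⟩ := hx
        obtain ⟨b, h, rfl⟩ := hy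
        refine Submodule.subset_span ⟨a * α g b, g * h, ?_⟩
        rw [map_mul, map_mul, mul_assoc, ← mul_assoc (u g), hcov]
        simp only [mul_assoc]
      | zero_left => simp
      | zero_right => simp
      | add_left x y z _ _ _ hx hy => rw [add_mul]; exact add_mem hx hy
      | add_right x y z _ _ _ hx hy => rw [mul_add]; exact add_mem hx hy
      | smul_left r x y _ _ h => rw [smul_mul_assoc]; exact Submodule.smul_mem _ r h
      | smul_right r x y _ _ h => rw [mul_smul_comm]; exact Submodule.smul_mem _ r h)
  star_mem' := by
    intro x hx
    change x ∈ Submodule.span ℂ {x : B | ∃ (a : A) (g : G), x = π a * u g} at hx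
    change star x ∈ Submodule.span ℂ {x : B | ∃ (a : A) (g : G), x = π a * u g}
    induction hx using Submodule.span_induction with
    | mem x hx =>
      obtain ⟨a, g, rfl⟩ := hx
      exact Submodule.subset_span ⟨α g⁻¹ (star a), g⁻¹, by
        rw [star_mul, hstar, ← map_star, hcov]⟩
    | zero => simp
    | add x y _ _ hx hy => rw [star_add]; exact add_mem hx hy
    | smul r x _ hx => rw [star_smul]; exact Submodule.smul_mem _ _ hx

theorem coe_covariantSpan {G A B : Type*} [Group G] [Ring A] [StarRing A] [Algebra ℂ A]
    [Ring B] [StarRing B] [Algebra ℂ B] [StarModule ℂ B]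
    (α : G → A → A) (π : A →⋆ₐ[ℂ] B) (u : G →* B) (hstar : ∀ g, star (u g) = u g⁻¹)
    (hcov : ∀ g a, u g * π a = π (α g a) * u g) :
    (covariantSpan α π u hstar hcov : Set B) =
      Submodule.span ℂ {x : B | ∃ (a : A) (g : G), x = π a * u g} := rfl

namespace IsReducedCrossedProduct

variable {G A T : Type*} [Group G] [CStarAlgebra A] [CStarAlgebra T]
  {α : G → A ≃⋆ₐ[ℂ] A} {ι : A →⋆ₐ[ℂ] T} {u : G → T}

theorem star_u (h : IsReducedCrossedProduct G α ι u) (g : G) : star (u g) = u g⁻¹ := by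
  have h1 : u g * u g⁻¹ = 1 := by rw [← h.u_mul, mul_inv_cancel, h.u_one]
  calc star (u g) = star (u g) * (u g * u g⁻¹) := by rw [h1, mul_one]
    _ = u g⁻¹ := by rw [← mul_assoc, Unitary.star_mul_self_of_mem (h.unitary g), one_mul]

theorem u_mul_ι (h : IsReducedCrossedProduct G α ι u) (g : G) (a : A) :
    u g * ι a = ι (α g a) * u g := by
  rw [← h.covariant, mul_assoc (u g * ι a), Unitary.star_mul_self_of_mem (h.unitary g), mul_one]

/-- The unitary representation as a monoid homomorphism. -/
def uHom (h : IsReducedCrossedProduct G α ι u) : G →* T where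
  toFun := u
  map_one' := h.u_one
  map_mul' := h.u_mul

end IsReducedCrossedProduct

section ExtendByZero

variable {G T : Type*} [Group G] {H : Subgroup G}

open Classical in
/-- Extension by zero of a function on a subgroup to the whole group. -/
noncomputable def Subgroup.extendByZero [Zero T] (u : H → T) (g : G) : T :=
  if h : g ∈ H then u ⟨g, h⟩ else 0

theorem Subgroup.extendByZero_of_mem [Zero T] (u : H → T) {g : G} (hg : g ∈ H) :
    H.extendByZero u g = u ⟨g, hg⟩ := dif_pos hg

theorem Subgroup.extendByZero_of_notMem [Zero T] (u : H → T) {g : G} (hg : g ∉ H) :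
    H.extendByZero u g = 0 := dif_neg hg

theorem Subgroup.extendByZero_mul [Ring T] {u : H → T} (hu : ∀ g h, u (g * h) = u g * u h)
    (g : G) {h : G} (hh : h ∈ H) :
    H.extendByZero u (g * h) = H.extendByZero u g * H.extendByZero u h := by
  by_cases hg : g ∈ H
  · rw [extendByZero_of_mem u hg, extendByZero_of_mem u hh, ← hu,
      extendByZero_of_mem u (mul_mem hg hh)]
    rfl
  · rw [extendByZero_of_notMem u hg, zero_mul, extendByZero_of_notMem]
    rwa [Subgroup.mul_mem_cancel_right H hh]

theorem Subgroup.star_extendByZero [Ring T] [StarRing T] {u : H → T}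
    (hu : ∀ g, star (u g) = u g⁻¹) (g : G) :
    star (H.extendByZero u g) = H.extendByZero u g⁻¹ := by
  by_cases hg : g ∈ H
  · rw [extendByZero_of_mem u hg, extendByZero_of_mem u (inv_mem hg), hu]
    rfl
  · rw [extendByZero_of_notMem u hg, extendByZero_of_notMem u (by simpa using hg), star_zero]

/-- The representation by matrices induced from a representation `u` of a subgroup `H`, with
respect to a system `s` of representatives of the left cosets of `H`. -/
noncomputable def Subgroup.inducedMatrix [Ring T] {I : Type*} [Fintype I] [DecidableEq I]
    {u : H → T} (hu_one : u 1 = 1) (hu : ∀ g h, u (g * h) = u g * u h) {s : I → G}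
    (hs : ∀ g, ∃! i, (s i)⁻¹ * g ∈ H) : G →* Matrix I I T where
  toFun g := Matrix.of fun i j => H.extendByZero u ((s i)⁻¹ * g * s j)
  map_one' := by
    ext i j
    rw [Matrix.of_apply, mul_one]
    obtain rfl | hij := eq_or_ne i j
    · rw [inv_mul_cancel, extendByZero_of_mem u (one_mem H), Matrix.one_apply_eq]
      exact hu_one
    · rw [Matrix.one_apply_ne hij, extendByZero_of_notMem]
      exact fun h => hij ((hs (s j)).unique h (by simp))
  map_mul' g h := by
    ext i j
    rw [Matrix.mul_apply, Matrix.of_apply]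
    obtain ⟨k, hk, hk'⟩ := hs (h * s j)
    have hk₁ : (s k)⁻¹ * h * s j ∈ H := by simpa [mul_assoc] using hk
    rw [Finset.sum_eq_single k]
    · rw [Matrix.of_apply, Matrix.of_apply, ← extendByZero_mul hu _ hk₁]
      congr 1
      group
    · intro l _ hl
      rw [Matrix.of_apply (i := l), extendByZero_of_notMem u (g := (s l)⁻¹ * h * s j), mul_zero]
      exact fun h' => hl (hk' l (by simpa [mul_assoc] using h'))
    · simp

end ExtendByZero

/-- The diagonal representation `a ↦ diag (ι (β i a))`. -/
def diagonalStarAlgHom {I A T : Type*} [Fintype I] [DecidableEq I] [Ring A] [StarRing A]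
    [Algebra ℂ A] [Ring T] [StarRing T] [Algebra ℂ T] (β : I → A →⋆ₐ[ℂ] T) :
    A →⋆ₐ[ℂ] Matrix I I T where
  __ := (Matrix.diagonalAlgHom ℂ).comp (AlgHom.pi fun i => (β i : A →ₐ[ℂ] T))
  map_star' a := by
    change Matrix.diagonal (fun i => β i (star a)) = star (Matrix.diagonal fun i => β i a)
    rw [Matrix.star_eq_conjTranspose, Matrix.diagonal_conjTranspose]
    congr 1
    ext i
    exact map_star (β i) a

/-- A finite index subgroup has a system of left coset representatives indexed by `Fin n`. -/
theorem Subgroup.exists_leftCoset_representatives {G : Type*} [Group G] (H : Subgroup G) {n : ℕ}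
    (hn : n ≠ 0) (hidx : H.index = n) : ∃ s : Fin n → G, ∀ g, ∃! i, (s i)⁻¹ * g ∈ H := by
  have : Finite (G ⧸ H) := Nat.finite_of_card_ne_zero (by rwa [← Subgroup.index, hidx])
  let e : G ⧸ H ≃ Fin n := Finite.equivFinOfCardEq hidx
  refine ⟨fun i => (e.symm i).out, fun g => ⟨e g, ?_, fun i hi => ?_⟩⟩
  · beta_reduce
    rw [← QuotientGroup.eq]
    simp
  · beta_reduce at hi
    rw [← QuotientGroup.eq, QuotientGroup.out_eq'] at hi
    rw [← hi, e.apply_symm_apply]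

/-- If a faithful positive map kills the diagonal of `star y * y` then `y = 0`. -/
theorem Matrix.eq_zero_of_map_star_mul_self_diag_eq_zero {I A T : Type*} [Fintype I]
    [CStarAlgebra A] [CStarAlgebra T] (E : T →ₗ[ℂ] A)
    (hpos : ∀ x, ∃ y, E (star x * x) = star y * y) (hfaith : ∀ x, E (star x * x) = 0 → x = 0)
    (y : Matrix I I T) (hy : ∀ i, E ((star y * y) i i) = 0) : y = 0 := by
  let := CStarAlgebra.spectralOrder A
  have := CStarAlgebra.spectralOrderedRing A
  ext k i
  have h := hy i
  simp only [Matrix.mul_apply, Matrix.star_apply, map_sum] at h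
  rw [Finset.sum_eq_zero_iff_of_nonneg] at h
  · exact hfaith _ (h k (Finset.mem_univ k))
  · intro l _
    obtain ⟨z, hz⟩ := hpos (y l i)
    rw [hz]
    exact star_mul_self_nonneg z

/-- If `G₁ ≤ G₂` has finite index `n` and `G₂` acts on a unital
C*-algebra `A`, then the reduced crossed product `A ⋊ᵣ G₂` embeds into
`(A ⋊ᵣ G₁) ⊗ Mₙ(ℂ) ≅ Mₙ(A ⋊ᵣ G₁)`. -/
theorem reduced_crossedProduct_embeds_matrix
    {G₂ : Type*} [Group G₂] (G₁ : Subgroup G₂) (n : ℕ) (hn : n ≠ 0)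
    (hidx : G₁.index = n)
    {A T₂ T₁ : Type*} [CStarAlgebra A] [CStarAlgebra T₂] [CStarAlgebra T₁]
    (α : G₂ → A ≃⋆ₐ[ℂ] A)
    (ι₂ : A →⋆ₐ[ℂ] T₂) (u₂ : G₂ → T₂)
    (h₂ : IsReducedCrossedProduct G₂ α ι₂ u₂)
    (ι₁ : A →⋆ₐ[ℂ] T₁) (u₁ : ↥G₁ → T₁)
    (h₁ : IsReducedCrossedProduct ↥G₁ (fun g : ↥G₁ => α g) ι₁ u₁) :
    ∃ f : T₂ →⋆ₐ[ℂ] Matrix (Fin n) (Fin n) T₁, Function.Injective f := by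
  let := CStarAlgebra.spectralOrder T₁
  have := CStarAlgebra.spectralOrderedRing T₁
  obtain ⟨s, hs⟩ := G₁.exists_leftCoset_representatives hn hidx
  obtain ⟨E₁, hE₁_norm, hE₁_ι, hE₁_u, -, hE₁_pos, hE₁_faith⟩ := h₁.expectation
  obtain ⟨E₂, hE₂_norm, hE₂_ι, hE₂_u, -, -, hE₂_faith⟩ := h₂.expectation
  let Φ : Matrix (Fin n) (Fin n) T₁ ≃⋆ₐ[ℂ] CStarMatrix (Fin n) (Fin n) T₁ :=
    CStarMatrix.ofMatrixStarAlgEquiv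
  let π₀ : A →⋆ₐ[ℂ] Matrix (Fin n) (Fin n) T₁ :=
    diagonalStarAlgHom fun i => ι₁.comp (α (s i)⁻¹ : A →⋆ₐ[ℂ] A)
  let U₀ : G₂ →* Matrix (Fin n) (Fin n) T₁ := G₁.inducedMatrix h₁.u_one h₁.u_mul hs
  have hU₀ (g : G₂) (i j : Fin n) :
      U₀ g i j = G₁.extendByZero u₁ ((s i)⁻¹ * g * s j) := rfl
  have hπ₀ (a : A) : π₀ a = Matrix.diagonal fun i => ι₁ (α (s i)⁻¹ a) := rfl
  have hstar₀ (g : G₂) : star (U₀ g) = U₀ g⁻¹ := by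
    ext i j
    rw [Matrix.star_apply, hU₀, hU₀, Subgroup.star_extendByZero h₁.star_u]
    congr 1
    group
  have hcov₀ (g : G₂) (a : A) : U₀ g * π₀ a = π₀ (α g a) * U₀ g := by
    ext i j
    rw [hπ₀, hπ₀, Matrix.mul_diagonal, Matrix.diagonal_mul, hU₀]
    by_cases hg : (s i)⁻¹ * g * s j ∈ G₁
    · rw [Subgroup.extendByZero_of_mem u₁ hg, h₁.u_mul_ι, ← h₂.action_mul, ← h₂.action_mul]
      congr 4
      group
    · rw [Subgroup.extendByZero_of_notMem u₁ hg, zero_mul, mul_zero]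
  let π : A →⋆ₐ[ℂ] T₂ × CStarMatrix (Fin n) (Fin n) T₁ :=
    ι₂.prod ((Φ : Matrix (Fin n) (Fin n) T₁ →⋆ₐ[ℂ] CStarMatrix (Fin n) (Fin n) T₁).comp π₀)
  let U : G₂ →* T₂ × CStarMatrix (Fin n) (Fin n) T₁ :=
    h₂.uHom.prod ((Φ : Matrix (Fin n) (Fin n) T₁ →* CStarMatrix (Fin n) (Fin n) T₁).comp U₀)
  have hstar (g : G₂) : star (U g) = U g⁻¹ :=
    Prod.ext (h₂.star_u g) ((map_star Φ (U₀ g)).symm.trans (congrArg Φ (hstar₀ g)))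
  have hcov (g : G₂) (a : A) : U g * π a = π (α g a) * U g :=
    Prod.ext (h₂.u_mul_ι g a) <| (map_mul Φ (U₀ g) (π₀ a)).symm.trans <|
      (congrArg Φ (hcov₀ g a)).trans (map_mul Φ _ _)
  let D₀ := covariantSpan (fun g => α g) π U hstar hcov
  have hexp (i : Fin n) : ∀ x ∈ D₀.topologicalClosure, E₁ (x.2 i i) = α (s i)⁻¹ (E₂ x.1) := by
    have hE₁c : Continuous E₁ :=
      (E₁.mkContinuous 1 fun x => by simpa using hE₁_norm x).continuous
    have hE₂c : Continuous E₂ :=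
      (E₂.mkContinuous 1 fun x => by simpa using hE₂_norm x).continuous
    have hαc : Continuous (α (s i)⁻¹) :=
      (NonUnitalStarAlgHom.isometry (α (s i)⁻¹) (α (s i)⁻¹).injective).continuous
    have hentry : Continuous fun y : CStarMatrix (Fin n) (Fin n) T₁ => y i i :=
      (continuous_apply_apply i i).comp
        (CStarMatrix.ofMatrixL (m := Fin n) (n := Fin n) (A := T₁)).symm.continuous
    refine closure_minimal (t := {x : T₂ × CStarMatrix (Fin n) (Fin n) T₁ |
        E₁ (x.2 i i) = α (s i)⁻¹ (E₂ x.1)}) ?_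
      (isClosed_eq (hE₁c.comp (hentry.comp continuous_snd))
        (hαc.comp (hE₂c.comp continuous_fst)))
    rw [coe_covariantSpan]
    intro x hx
    induction hx using Submodule.span_induction with
    | mem x hx =>
      obtain ⟨a, g, rfl⟩ := hx
      change E₁ ((π₀ a * U₀ g) i i) = α (s i)⁻¹ (E₂ (ι₂ a * u₂ g))
      rw [hπ₀, Matrix.diagonal_mul, hU₀]
      obtain rfl | hg := eq_or_ne g 1
      · rw [mul_one, inv_mul_cancel, Subgroup.extendByZero_of_mem u₁ (one_mem G₁), h₂.u_one,
          mul_one, hE₂_ι]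
        exact (congrArg E₁ ((congrArg _ h₁.u_one).trans (mul_one _))).trans (hE₁_ι _)
      · rw [hE₂_u a g hg, map_zero]
        by_cases hmem : (s i)⁻¹ * g * s i ∈ G₁
        · rw [Subgroup.extendByZero_of_mem u₁ hmem]
          refine hE₁_u _ _ fun h => hg ?_
          have h' : (s i)⁻¹ * g * s i = 1 := congrArg Subtype.val h
          rw [mul_assoc, inv_mul_eq_one] at h'
          exact mul_eq_right.1 h'.symm
        · rw [Subgroup.extendByZero_of_notMem u₁ hmem, mul_zero, map_zero]
    | zero => simp
    | add x y _ _ hx hy =>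
      simp only [Set.mem_ofPred_eq] at hx hy ⊢
      simp [hx, hy]
    | smul r x _ hx =>
      simp only [Set.mem_ofPred_eq] at hx ⊢
      simp [hx]
  suffices h : ∃ f : T₂ →⋆ₐ[ℂ] CStarMatrix (Fin n) (Fin n) T₁, Function.Injective f by
    obtain ⟨f, hf⟩ := h
    exact ⟨(Φ.symm : CStarMatrix (Fin n) (Fin n) T₁ →⋆ₐ[ℂ] Matrix (Fin n) (Fin n) T₁).comp f,
      Φ.symm.injective.comp hf⟩
  refine D₀.topologicalClosure.exists_injective_starAlgHom_of_isClosed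
    D₀.isClosed_topologicalClosure ?_ ?_ ?_
  · intro x hx hx0
    refine Prod.ext hx0 ?_
    refine Matrix.eq_zero_of_map_star_mul_self_diag_eq_zero E₁ hE₁_pos hE₁_faith x.2 fun i => ?_
    refine (hexp i _ (mul_mem (star_mem hx) hx)).trans ?_
    simp [hx0]
  · intro x hx hx0
    refine Prod.ext (hE₂_faith _ ?_) hx0
    let i : Fin n := ⟨0, Nat.pos_of_ne_zero hn⟩
    apply (α (s i)⁻¹).injective
    refine (hexp i _ (mul_mem (star_mem hx) hx)).symm.trans ?_
    simp [hx0]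
  · refine h₂.generates.mono ?_
    refine Set.Subset.trans ?_ (Set.image_mono D₀.le_topologicalClosure)
    rw [coe_covariantSpan]
    change _ ⊆ ((Submodule.span ℂ _).map (LinearMap.fst ℂ T₂ _) : Submodule ℂ T₂).carrier
    refine Submodule.span_le.2 ?_
    rintro _ ⟨a, g, rfl⟩
    exact ⟨π a * U g, Submodule.subset_span ⟨a, g, rfl⟩, rfl⟩
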